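/- arXiv:1410.6222 — 3 statements merged into one kernel-verified Lean document; each statement's English description precedes it below -/
import Mathlib

section
/- Let X and Y be real normed spaces, X_m ⊆ X a finite-dimensional subspace, D ⊆ X closed convex with D_m := D ∩ X_m nonempty, F : X → Y continuous, p ∈ [1, ∞), α > 0, and f : X → ℝ nonnegative, lower semicontinuous and coercive. Let y^δ ∈ Y and let (y_k)_{k∈ℕ} ⊆ Y with ‖y_k − y^δ‖ → 0. For each k let x_k ∈ D_m be a minimizer over D_m of x ↦ ‖F(x) − y_k‖^p + α f(x). Then there exist a subsequence (x_{k_l}) and x̃ ∈ D_m such that x_{k_l} converges weakly to x̃, x̃ minimizes x ↦ ‖F(x) − y^δ‖^p + α f(x) over D_m, and f(x_{k_l}) → f(x̃). -/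
open Filter Topology

/-- Weak convergence of a sequence in a normed space: convergence against every
continuous linear functional. -/
def WeakTendsto {E : Type*} [NormedAddCommGroup E] [NormedSpace ℝ E]
    (u : ℕ → E) (x : E) : Prop :=
  ∀ φ : E →L[ℝ] ℝ, Filter.Tendsto (fun n => φ (u n)) Filter.atTop (nhds (φ x))

/-!
Comparing each minimizer with one fixed admissible point bounds the penalties `f (x k)`, so
compactness of the sublevel sets of `f` yields a convergent subsequence, with limit `x̄`. The
residuals converge along it, so comparing the minimizers with `x̄` itself gives
`limsup f (x k) ≤ f x̄`; lower semicontinuity is the opposite inequality. The minimal values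
therefore converge to the value at `x̄`, and minimality passes to the limit. In finite dimension
norm convergence is available, and it implies weak convergence.
-/

section Compactness

theorem isCompact_inter_of_properSpace {E : Type*} [PseudoMetricSpace E] {K s : Set E}
    [ProperSpace s] (hK : IsClosed K) (hb : Bornology.IsBounded K) : IsCompact (K ∩ s) := by
  have hpre : IsCompact (Subtype.val ⁻¹' K : Set s) :=
    Metric.isCompact_of_isClosed_isBounded (hK.preimage continuous_subtype_val)
      (Bornology.isBounded_image_subtype_val.1 (hb.subset (Set.image_preimage_subset _ K)))
  simpa only [Subtype.image_preimage_coe, Set.inter_comm] using hpre.image continuous_subtype_val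

theorem isCompact_sublevel_inter_of_properSpace {E : Type*} [PseudoMetricSpace E] {D s : Set E}
    [ProperSpace s] {f : E → ℝ} {C : ℝ} (hD : IsClosed D) (hf : LowerSemicontinuous f)
    (hb : Bornology.IsBounded {x | f x ≤ C}) : IsCompact {x ∈ D ∩ s | f x ≤ C} := by
  have hclosed : IsClosed (D ∩ {x | f x ≤ C}) := hD.inter (hf.isClosed_preimage C)
  have hcompact := isCompact_inter_of_properSpace (s := s) hclosed
    (hb.subset Set.inter_subset_right)
  rwa [Set.inter_right_comm] at hcompact

end Compactness

theorem weakTendsto_of_tendsto {E : Type*} [NormedAddCommGroup E] [NormedSpace ℝ E]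
    {u : ℕ → E} {x : E} (h : Tendsto u atTop (𝓝 x)) : WeakTendsto u x :=
  fun φ => (φ.continuous.tendsto x).comp h

section Limits

variable {X ι : Type*} {l : Filter ι} {M : Set X} {u : ι → X} {a : X}

theorem tendsto_comp_of_lowerSemicontinuousWithinAt_of_le {β : Type*} [TopologicalSpace X]
    [LinearOrder β] [TopologicalSpace β] [OrderTopology β] {f : X → β} {b : ι → β}
    (hf : LowerSemicontinuousWithinAt f M a) (hu : Tendsto u l (𝓝[M] a))
    (hb : Tendsto b l (𝓝 (f a))) (hle : ∀ i, f (u i) ≤ b i) :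
    Tendsto (fun i => f (u i)) l (𝓝 (f a)) := by
  refine tendsto_order.2 ⟨fun c hc => hu.eventually (hf c hc), fun c hc => ?_⟩
  filter_upwards [hb.eventually_lt_const hc] with i hi using (hle i).trans_lt hi

theorem isMinOn_of_tendsto {β : Type*} [Preorder β] [TopologicalSpace β]
    [OrderClosedTopology β] [l.NeBot] {J : ι → X → β} {J₀ : X → β}
    (hmin : ∀ i, IsMinOn (J i) M (u i)) (hu : Tendsto (fun i => J i (u i)) l (𝓝 (J₀ a)))
    (hJ : ∀ v ∈ M, Tendsto (fun i => J i v) l (𝓝 (J₀ v))) : IsMinOn J₀ M a :=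
  fun v hv => le_of_tendsto_of_tendsto' hu (hJ v hv) fun i => hmin i hv

end Limits

section Tikhonov

variable {X Y ι : Type*} [SeminormedAddCommGroup Y] {l : Filter ι} {M : Set X}
  {F : X → Y} {p α : ℝ} {f : X → ℝ} {y : ι → Y} {y₀ : Y} {x : ι → X} {a : X}

/-- The Tikhonov functional `x ↦ ‖F x - y‖ ^ p + α * f x` for the forward operator `F`, the data
`y`, the penalty `f` and the regularization parameter `α`. -/
noncomputable def tikhonov (F : X → Y) (p α : ℝ) (f : X → ℝ) (y : Y) (x : X) : ℝ :=
  ‖F x - y‖ ^ p + α * f x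

theorem mul_penalty_le_tikhonov (y : Y) (x : X) : α * f x ≤ tikhonov F p α f y x :=
  le_add_of_nonneg_left (Real.rpow_nonneg (norm_nonneg _) p)

theorem tendsto_residual {w : ι → Y} {w₀ : Y} (hp : 0 ≤ p) (hw : Tendsto w l (𝓝 w₀))
    (hy : Tendsto y l (𝓝 y₀)) :
    Tendsto (fun i => ‖w i - y i‖ ^ p) l (𝓝 (‖w₀ - y₀‖ ^ p)) :=
  (hw.sub hy).norm.rpow_const (Or.inr hp)

theorem tendsto_tikhonov (hp : 0 ≤ p) (hF : Tendsto (fun i => F (x i)) l (𝓝 (F a)))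
    (hf : Tendsto (fun i => f (x i)) l (𝓝 (f a))) (hy : Tendsto y l (𝓝 y₀)) :
    Tendsto (fun i => tikhonov F p α f (y i) (x i)) l (𝓝 (tikhonov F p α f y₀ a)) :=
  (tendsto_residual hp hF hy).add (hf.const_mul α)

theorem exists_penalty_le_of_isMinOn {y : ℕ → Y} {x : ℕ → X} (hp : 0 ≤ p) (hα : 0 < α)
    (hy : Tendsto y atTop (𝓝 y₀)) (ha : a ∈ M)
    (hmin : ∀ k, IsMinOn (tikhonov F p α f (y k)) M (x k)) : ∃ C, ∀ k, f (x k) ≤ C := by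
  obtain ⟨B, hB⟩ := (tendsto_tikhonov (F := F) (α := α) (f := f) (x := fun _ => a) hp
    tendsto_const_nhds tendsto_const_nhds hy).bddAbove_range
  refine ⟨B / α, fun k => (le_div_iff₀' hα).2 ?_⟩
  calc α * f (x k) ≤ tikhonov F p α f (y k) (x k) := mul_penalty_le_tikhonov _ _
    _ ≤ tikhonov F p α f (y k) a := hmin k ha
    _ ≤ B := hB ⟨k, rfl⟩

theorem penalty_le_of_tikhonov_le {y : Y} {u v : X} (hα : 0 < α)
    (h : tikhonov F p α f y u ≤ tikhonov F p α f y v) :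
    f u ≤ f v + (‖F v - y‖ ^ p - ‖F u - y‖ ^ p) / α := by
  unfold tikhonov at h
  rw [← sub_le_iff_le_add', le_div_iff₀' hα]
  linarith

variable [TopologicalSpace X]

theorem tendsto_penalty_of_isMinOn (hp : 0 ≤ p) (hα : 0 < α)
    (hF : ContinuousWithinAt F M a) (hf : LowerSemicontinuousWithinAt f M a)
    (hy : Tendsto y l (𝓝 y₀)) (hx : Tendsto x l (𝓝[M] a)) (ha : a ∈ M)
    (hmin : ∀ i, IsMinOn (tikhonov F p α f (y i)) M (x i)) :
    Tendsto (fun i => f (x i)) l (𝓝 (f a)) := by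
  have hgap : Tendsto (fun i => ‖F a - y i‖ ^ p - ‖F (x i) - y i‖ ^ p) l (𝓝 0) := by
    have hFx : Tendsto (fun i => F (x i)) l (𝓝 (F a)) := hF.tendsto.comp hx
    have hFa : Tendsto (fun _ => F a) l (𝓝 (F a)) := tendsto_const_nhds
    simpa only [sub_self] using (tendsto_residual hp hFa hy).sub (tendsto_residual hp hFx hy)
  have hbound : Tendsto (fun i => f a + (‖F a - y i‖ ^ p - ‖F (x i) - y i‖ ^ p) / α) l
      (𝓝 (f a)) := by
    simpa only [zero_div, add_zero] using (hgap.div_const α).const_add (f a)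
  exact tendsto_comp_of_lowerSemicontinuousWithinAt_of_le hf hx hbound fun i =>
    penalty_le_of_tikhonov_le hα (hmin i ha)

theorem isMinOn_tikhonov_of_tendsto [l.NeBot] (hp : 0 ≤ p)
    (hF : ContinuousWithinAt F M a) (hy : Tendsto y l (𝓝 y₀)) (hx : Tendsto x l (𝓝[M] a))
    (hfx : Tendsto (fun i => f (x i)) l (𝓝 (f a)))
    (hmin : ∀ i, IsMinOn (tikhonov F p α f (y i)) M (x i)) :
    IsMinOn (tikhonov F p α f y₀) M a :=
  isMinOn_of_tendsto hmin (tendsto_tikhonov hp (hF.tendsto.comp hx) hfx hy) fun _ _ =>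
    tendsto_tikhonov hp tendsto_const_nhds tendsto_const_nhds hy

theorem stmt_2_general {y : ℕ → Y} {x : ℕ → X} (hp : 0 < p) (hα : 0 < α)
    (hF : ContinuousOn F M) (hf : LowerSemicontinuousOn f M)
    (hcompact : ∀ C, IsSeqCompact {v ∈ M | f v ≤ C}) (hy : Tendsto y atTop (𝓝 y₀))
    (hx : ∀ k, x k ∈ M ∧ IsMinOn (tikhonov F p α f (y k)) M (x k)) :
    ∃ φ : ℕ → ℕ, StrictMono φ ∧ ∃ a ∈ M, Tendsto (fun n => x (φ n)) atTop (𝓝 a) ∧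
      IsMinOn (tikhonov F p α f y₀) M a ∧ Tendsto (fun n => f (x (φ n))) atTop (𝓝 (f a)) := by
  choose hxM hmin using hx
  obtain ⟨C, hC⟩ := exists_penalty_le_of_isMinOn hp.le hα hy (hxM 0) hmin
  obtain ⟨a, ⟨ha, -⟩, φ, hφ, hlim⟩ := hcompact C fun k => ⟨hxM k, hC k⟩
  have hyφ := hy.comp hφ.tendsto_atTop
  have hlimM : Tendsto (x ∘ φ) atTop (𝓝[M] a) :=
    tendsto_nhdsWithin_iff.2 ⟨hlim, .of_forall fun n => hxM (φ n)⟩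
  have hfφ := tendsto_penalty_of_isMinOn hp.le hα (hF a ha) (hf a ha) hyφ hlimM ha
    fun n => hmin (φ n)
  exact ⟨φ, hφ, a, ha, hlim,
    isMinOn_tikhonov_of_tendsto hp.le (hF a ha) hyφ hlimM hfφ fun n => hmin (φ n), hfφ⟩

end Tikhonov

/-- Stability of Tikhonov minimizers on a finite-dimensional discretized domain:
if the data `y_k` converge to `y^δ`, then a subsequence of the corresponding minimizers
converges weakly to a minimizer for the data `y^δ`, together with convergence of the
penalty values. -/
theorem stmt_2 {X Y : Type*} [NormedAddCommGroup X] [NormedSpace ℝ X]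
    [NormedAddCommGroup Y] [NormedSpace ℝ Y]
    (Xm : Subspace ℝ X) [FiniteDimensional ℝ Xm]
    (D : Set X) (hDclosed : IsClosed D) (hDconv : Convex ℝ D)
    (hne : (D ∩ (Xm : Set X)).Nonempty)
    (F : X → Y) (hF : Continuous F)
    (p : ℝ) (hp : 1 ≤ p)
    (α : ℝ) (hα : 0 < α)
    (f : X → ℝ) (hf0 : ∀ x, 0 ≤ f x) (hflsc : LowerSemicontinuous f)
    (hfcoer : ∀ C : ℝ, Bornology.IsBounded {x : X | f x ≤ C})
    (yδ : Y) (yk : ℕ → Y)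
    (hyk : Tendsto (fun k => ‖yk k - yδ‖) atTop (𝓝 0))
    (x : ℕ → X)
    (hx : ∀ k, x k ∈ D ∩ (Xm : Set X) ∧ ∀ v ∈ D ∩ (Xm : Set X),
      ‖F (x k) - yk k‖ ^ p + α * f (x k) ≤ ‖F v - yk k‖ ^ p + α * f v) :
    ∃ (φ : ℕ → ℕ), StrictMono φ ∧ ∃ xt ∈ D ∩ (Xm : Set X),
      WeakTendsto (fun l => x (φ l)) xt ∧
      (∀ v ∈ D ∩ (Xm : Set X),
        ‖F xt - yδ‖ ^ p + α * f xt ≤ ‖F v - yδ‖ ^ p + α * f v) ∧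
      Tendsto (fun l => f (x (φ l))) atTop (𝓝 (f xt)) := by
  have : ProperSpace Xm := FiniteDimensional.proper ℝ Xm
  obtain ⟨φ, hφ, xt, hxt, hlim, hmin, hf⟩ := stmt_2_general (zero_lt_one.trans_le hp) hα
    hF.continuousOn (hflsc.lowerSemicontinuousOn _)
    (fun C => (isCompact_sublevel_inter_of_properSpace hDclosed hflsc (hfcoer C)).isSeqCompact)
    (tendsto_iff_norm_sub_tendsto_zero.2 hyk) hx
  exact ⟨φ, hφ, xt, hxt, weakTendsto_of_tendsto hlim, hmin, hf⟩
end

section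
/- Let X and Y be real normed spaces, D ⊆ X closed and convex, F : X → Y continuous, y^δ ∈ Y, δ > 0, p ∈ [1, ∞), and let f : X → ℝ be nonnegative, convex, lower semicontinuous and coercive with a unique zero x₀ ∈ D. Let 1 < τ < τ₂ < λ. Let (X_m)_{m∈ℕ} be an increasing sequence of finite-dimensional subspaces of X with each D_m := D ∩ X_m nonempty and containing x₀. Suppose there are points z_m ∈ D_m and real numbers γ_m ≥ 0 with ‖F(z_m) − y^δ‖ ≤ δ + γ_m and γ_m → 0 as m → ∞; suppose ‖F(x₀) − y^δ‖ > τ₂(δ + γ_m) for every m; and suppose that for every m there is no α > 0 admitting minimizers u, v of T_α over D_m with ‖F(u) − y^δ‖ < τ(δ+γ_m) and ‖F(v) − y^δ‖ > τ₂(δ+γ_m) simultaneously. Then there exist m ∈ ℕ, α > 0 and a minimizer x of T_α over D_m such that τδ ≤ ‖F(x) − y^δ‖ ≤ λδ. -/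
open Filter Topology

/-!
At a fixed level, the parameters `α > 0` admitting a minimizer with residual at most `a` and those
admitting one with residual at least `b` form two relatively closed sets, because minimizers with
`α` bounded away from `0` stay in a compact sublevel set of the penalty. If no minimizer had its
residual in `[a, b]`, these two sets would cover `(0, ∞)`. Both are nonempty: a small `α` forces the
residual below that of `z`, and a large `α` forces the minimizer towards the zero of the penalty,
where the residual exceeds `b`. By connectedness some `α` would lie in both, which is the excluded
jump. Since the noise level `δ + γ m` tends to `δ`, a level with `τ₂ (δ + γ m) ≤ λ δ` gives the
discrepancy principle.
-/

section Semicontinuity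

open Set

variable {X : Type*} [TopologicalSpace X]

theorem isCompact_setOf_forall_le {ι β : Type*} [LinearOrder β] {s : Set X} {φ : ι → X → β}
    (hs : IsCompact s) (hφ : ∀ i, LowerSemicontinuousOn (φ i) s) (c : ι → β) :
    IsCompact {x ∈ s | ∀ i, φ i x ≤ c i} := by
  choose v hv hsv using fun i ↦ lowerSemicontinuousOn_iff_preimage_Iic.1 (hφ i) (c i)
  convert hs.inter_right (isClosed_iInter hv) using 1
  ext x
  simp only [mem_ofPred_eq, mem_inter_iff, mem_iInter, and_congr_right_iff]
  exact fun hx ↦ forall_congr' fun i ↦ by simpa [hx] using Set.ext_iff.1 (hsv i) x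

theorem exists_lt_forall_le_of_isCompact {β : Type*} [LinearOrder β] [NoMaxOrder β] {s : Set X}
    {f : X → β} {m : β} (hs : IsCompact s) (hf : LowerSemicontinuousOn f s)
    (hm : ∀ x ∈ s, m < f x) : ∃ c, m < c ∧ ∀ x ∈ s, c ≤ f x := by
  rcases s.eq_empty_or_nonempty with rfl | hne
  · obtain ⟨c, hc⟩ := exists_gt m
    exact ⟨c, hc, fun _ hx ↦ hx.elim⟩
  · obtain ⟨y, hy, hmin⟩ := hf.exists_isMinOn hne hs
    exact ⟨f y, hm y hy, hmin⟩

theorem lowerSemicontinuousOn_fst_mul_snd {s : Set X} {f : X → ℝ}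
    (hf : LowerSemicontinuousOn f s) :
    LowerSemicontinuousOn (fun q : ℝ × X ↦ q.1 * f q.2) (Ioi 0 ×ˢ s) := by
  have hsndlsc : LowerSemicontinuousOn (fun q : ℝ × X ↦ f q.2) (Ioi 0 ×ˢ s) :=
    hf.comp continuousOn_snd fun _ hq ↦ hq.2
  intro ⟨α, x⟩ ⟨(hα : 0 < α), hx⟩ y hy
  obtain ⟨c, hyc, hcf⟩ := exists_between ((div_lt_iff₀' hα).2 hy)
  have hfst : ∀ᶠ q : ℝ × X in 𝓝[Ioi 0 ×ˢ s] (α, x), y < q.1 * c :=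
    ((continuous_fst.mul continuous_const).continuousWithinAt).eventually_const_lt
      ((div_lt_iff₀' hα).1 hyc)
  have hsnd : ∀ᶠ q : ℝ × X in 𝓝[Ioi 0 ×ˢ s] (α, x), c < f q.2 :=
    hsndlsc (α, x) ⟨hα, hx⟩ c hcf
  filter_upwards [hfst, hsnd, self_mem_nhdsWithin] with q hyq hcq hq
  exact hyq.trans (mul_lt_mul_of_pos_left hcq hq.1)

theorem lowerSemicontinuousOn_rpow_const {s : Set X} {r : X → ℝ} {p : ℝ}
    (hr : LowerSemicontinuousOn r s) (hr0 : ∀ x, 0 ≤ r x) (hp : 0 ≤ p) :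
    LowerSemicontinuousOn (fun x ↦ r x ^ p) s := by
  have hcont : Continuous fun t : ℝ ↦ max t 0 ^ p :=
    (continuous_id.max continuous_const).rpow_const fun _ ↦ Or.inr hp
  have hmono : Monotone fun t : ℝ ↦ max t 0 ^ p := fun t u htu ↦
    Real.rpow_le_rpow (le_max_right t 0) (max_le_max_right 0 htu) hp
  simpa only [Function.comp_def, max_eq_left (hr0 _)] using
    hcont.comp_lowerSemicontinuousOn hr hmono

end Semicontinuity

section FiniteDimensional

variable {𝕜 X : Type*} [NontriviallyNormedField 𝕜] [LocallyCompactSpace 𝕜]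
  [NormedAddCommGroup X] [NormedSpace 𝕜 X]

theorem isCompact_inter_of_finiteDimensional (S : Subspace 𝕜 X) [FiniteDimensional 𝕜 S]
    {E : Set X} (hE : IsClosed E) (hEb : Bornology.IsBounded E) :
    IsCompact (E ∩ (S : Set X)) := by
  have : ProperSpace S := FiniteDimensional.proper 𝕜 S
  have hpre : IsCompact ((↑) ⁻¹' E : Set S) :=
    Metric.isCompact_of_isClosed_isBounded (hE.preimage continuous_subtype_val)
      (isometry_subtype_coe.antilipschitz.isBounded_preimage hEb)
  rw [Set.inter_comm, ← Subtype.image_preimage_coe (S : Set X) E]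
  exact hpre.image continuous_subtype_val

theorem isCompact_sublevel_inter_of_finiteDimensional (S : Subspace 𝕜 X) [FiniteDimensional 𝕜 S]
    {β : Type*} [LinearOrder β] {D : Set X} (hD : IsClosed D) {f : X → β}
    (hf : LowerSemicontinuous f) {C : β} (hb : Bornology.IsBounded {x | f x ≤ C}) :
    IsCompact {x ∈ D ∩ (S : Set X) | f x ≤ C} := by
  have h := isCompact_inter_of_finiteDimensional S (hD.inter (hf.isClosed_preimage C))
    (hb.subset Set.inter_subset_right)
  rwa [Set.inter_right_comm] at h

end FiniteDimensional

/-- The minimizers over `K` of the Tikhonov functional `g + α f` with fidelity `g`, penalty `f`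
and regularization parameter `α`. The exponent of the paper is absorbed into `g`. -/
def tikhonovMinimizers {X : Type*} (K : Set X) (g f : X → ℝ) (α : ℝ) : Set X :=
  {x ∈ K | ∀ w ∈ K, g x + α * f x ≤ g w + α * f w}

namespace tikhonovMinimizers

open Set

variable {X : Type*} {K : Set X} {g f : X → ℝ} {a b : ℝ}

theorem exists_pos_forall_lt (hf0 : ∀ x ∈ K, 0 ≤ f x) {z : X} (hz : z ∈ K) (hza : g z < a) :
    ∃ α > 0, ∀ x ∈ tikhonovMinimizers K g f α, g x < a := by
  have hfz : 0 < f z + 1 := by linarith [hf0 z hz]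
  have hα : 0 < (a - g z) / (f z + 1) := div_pos (sub_pos.2 hza) hfz
  refine ⟨_, hα, fun x ⟨hx, hmin⟩ ↦ ?_⟩
  have hαz := div_mul_cancel₀ (a - g z) hfz.ne'
  linarith [hmin z hz, mul_nonneg hα.le (hf0 x hx)]

theorem exists_pos_forall_gt_of_gap (hg0 : ∀ x ∈ K, 0 ≤ g x) {x₀ : X} (hx₀ : x₀ ∈ K) {c : ℝ}
    (hc : f x₀ < c) (hgap : ∀ x ∈ K, g x ≤ b → c ≤ f x) :
    ∃ α > 0, ∀ x ∈ tikhonovMinimizers K g f α, b < g x := by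
  have hc' : 0 < c - f x₀ := sub_pos.2 hc
  have hα : 0 < (g x₀ + 1) / (c - f x₀) := div_pos (by linarith [hg0 x₀ hx₀]) hc'
  refine ⟨_, hα, fun x ⟨hx, hmin⟩ ↦ ?_⟩
  by_contra! hgx
  have hαc := div_mul_cancel₀ (g x₀ + 1) hc'.ne'
  linarith [hmin x₀ hx₀, mul_le_mul_of_nonneg_left (hgap x hx hgx) hα.le, hg0 x hx]

variable [TopologicalSpace X]

theorem exists_pos_forall_gt (hg : LowerSemicontinuousOn g K) (hg0 : ∀ x ∈ K, 0 ≤ g x)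
    (hf : LowerSemicontinuousOn f K) (hK : ∀ C, IsCompact {x ∈ K | f x ≤ C})
    {x₀ : X} (hx₀ : x₀ ∈ K) (hfar : ∀ x ∈ K, g x ≤ b → f x₀ < f x) :
    ∃ α > 0, ∀ x ∈ tikhonovMinimizers K g f α, b < g x := by
  obtain ⟨c, hc, hcf⟩ := exists_lt_forall_le_of_isCompact
    ((hg.mono (sep_subset _ _)).isCompact_inter_preimage_Iic (hK (f x₀ + 1)) b)
    (hf.mono fun x hx ↦ hx.1.1) fun x hx ↦ hfar x hx.1.1 hx.2
  refine exists_pos_forall_gt_of_gap hg0 hx₀ (lt_min hc (lt_add_one (f x₀))) fun x hx hgx ↦ ?_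
  rcases le_total (f x) (f x₀ + 1) with hfx | hfx
  · exact min_le_of_left_le (hcf x ⟨⟨hx, hfx⟩, hgx⟩)
  · exact min_le_of_right_le hfx

theorem nonempty (hg : LowerSemicontinuousOn g K) (hg0 : ∀ x ∈ K, 0 ≤ g x)
    (hf : LowerSemicontinuousOn f K) (hK : ∀ C, IsCompact {x ∈ K | f x ≤ C})
    (hne : K.Nonempty) {α : ℝ} (hα : 0 < α) : (tikhonovMinimizers K g f α).Nonempty := by
  obtain ⟨z, hz⟩ := hne
  set C := f z + g z / α with hC
  have hαC : α * C = g z + α * f z := by rw [hC]; field_simp; ring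
  have hlsc : LowerSemicontinuousOn (fun x ↦ g x + α * f x) K :=
    hg.add <| (continuous_const_mul α).comp_lowerSemicontinuousOn hf
      (monotone_mul_left_of_nonneg hα.le)
  have hzC : z ∈ {x ∈ K | f x ≤ C} := ⟨hz, le_add_of_nonneg_right (div_nonneg (hg0 z hz) hα.le)⟩
  obtain ⟨x, hx, hmin⟩ := (hlsc.mono (sep_subset _ _)).exists_isMinOn ⟨z, hzC⟩ (hK C)
  refine ⟨x, hx.1, fun w hw ↦ ?_⟩
  rcases le_or_gt (f w) C with hwC | hCw
  · exact hmin ⟨hw, hwC⟩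
  · have hxz : g x + α * f x ≤ g z + α * f z := hmin hzC
    linarith [hg0 w hw, mul_lt_mul_of_pos_left hCw hα]

-- The candidates may range over `L ≠ K` with fidelity `h ≠ g`: this covers both constraints
-- `g x ≤ a` and `b ≤ g x` on a minimizer `x`, although the latter is not closed.
theorem isCompact_setOf_exists_forall_le {L : Set X} {h : X → ℝ} (hh : LowerSemicontinuousOn h L)
    (hh0 : ∀ x ∈ L, 0 ≤ h x) (hf : LowerSemicontinuousOn f L)
    (hL : ∀ C, IsCompact {x ∈ L | f x ≤ C}) (hne : K.Nonempty) {c : ℝ} (hc : 0 < c) (d : ℝ) :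
    IsCompact {α ∈ Icc c d | ∃ x ∈ L, ∀ w ∈ K, h x + α * f x ≤ g w + α * f w} := by
  obtain ⟨z, hz⟩ := hne
  set C := f z + |g z| / c
  have hbound {α x} (hα : c ≤ α) (hx : x ∈ L) (hxz : h x + α * f x ≤ g z + α * f z) : f x ≤ C := by
    have hα0 : 0 < α := hc.trans_le hα
    have hdiff : f x - f z ≤ |g z| / α := by
      rw [le_div_iff₀' hα0]
      linarith [hh0 x hx, le_abs_self (g z)]
    linarith [div_le_div_of_nonneg_left (abs_nonneg (g z)) hc hα]
  have hlsc (w : K) : LowerSemicontinuousOn (fun q : ℝ × X ↦ h q.2 + q.1 * (f q.2 + -f w))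
      (Icc c d ×ˢ {x ∈ L | f x ≤ C}) :=
    LowerSemicontinuousOn.add (hh.comp continuousOn_snd fun _ hq ↦ hq.2.1) <|
      (lowerSemicontinuousOn_fst_mul_snd (hf.add lowerSemicontinuousOn_const)).mono <|
        prod_mono (fun _ hα ↦ hc.trans_le hα.1) (sep_subset _ _)
  convert (isCompact_setOf_forall_le (isCompact_Icc.prod (hL C)) hlsc fun w ↦ g w).image
    continuous_fst using 1
  have hle (α : ℝ) (x w : X) :
      h x + α * (f x + -f w) ≤ g w ↔ h x + α * f x ≤ g w + α * f w := by
    rw [← sub_eq_add_neg, mul_sub, ← add_sub_assoc, sub_le_iff_le_add]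
  ext α
  simp only [hle, mem_image, mem_ofPred_eq, mem_prod, Prod.exists, exists_and_right,
    exists_eq_right, Subtype.forall]
  constructor
  · rintro ⟨hα, x, hx, hmin⟩
    exact ⟨x, ⟨hα, hx, hbound hα.1 hx (hmin z hz)⟩, hmin⟩
  · rintro ⟨x, ⟨hα, hx, -⟩, hmin⟩
    exact ⟨hα, x, hx, hmin⟩

theorem isClosed_setOf_exists_le (hg : LowerSemicontinuousOn g K) (hg0 : ∀ x ∈ K, 0 ≤ g x)
    (hf : LowerSemicontinuousOn f K) (hK : ∀ C, IsCompact {x ∈ K | f x ≤ C}) (hne : K.Nonempty)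
    {c : ℝ} (hc : 0 < c) (d a : ℝ) :
    IsClosed {α ∈ Icc c d | ∃ x ∈ tikhonovMinimizers K g f α, g x ≤ a} := by
  have hsub : {x ∈ K | g x ≤ a} ⊆ K := sep_subset _ _
  have hL (C : ℝ) : IsCompact {x ∈ {x ∈ K | g x ≤ a} | f x ≤ C} := by
    convert (hg.mono (sep_subset K (f · ≤ C))).isCompact_inter_preimage_Iic (hK C) a using 1
    exact inter_right_comm K {x | g x ≤ a} {x | f x ≤ C}
  convert (isCompact_setOf_exists_forall_le (g := g) (hg.mono hsub) (fun x hx ↦ hg0 x hx.1)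
    (hf.mono hsub) hL hne hc d).isClosed using 6
  simp only [tikhonovMinimizers, mem_ofPred_eq]
  tauto

theorem isClosed_setOf_exists_ge (hg : LowerSemicontinuousOn g K) (hg0 : ∀ x ∈ K, 0 ≤ g x)
    (hf : LowerSemicontinuousOn f K) (hK : ∀ C, IsCompact {x ∈ K | f x ≤ C}) (hne : K.Nonempty)
    {c : ℝ} (hc : 0 < c) (d b : ℝ) :
    IsClosed {α ∈ Icc c d | ∃ x ∈ tikhonovMinimizers K g f α, b ≤ g x} := by
  -- Testing `max (g x) b + α f x ≤ g w + α f w` at `w = x` gives `b ≤ g x`.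
  have hiff (α : ℝ) (x : X) : (x ∈ tikhonovMinimizers K g f α ∧ b ≤ g x) ↔
      x ∈ K ∧ ∀ w ∈ K, max (g x) b + α * f x ≤ g w + α * f w := by
    constructor
    · rintro ⟨⟨hx, hmin⟩, hb⟩
      exact ⟨hx, by rwa [max_eq_left hb]⟩
    · rintro ⟨hx, hmin⟩
      have hb : max (g x) b ≤ g x := le_of_add_le_add_right (hmin x hx)
      rw [max_eq_left (max_le_iff.1 hb).2] at hmin
      exact ⟨⟨hx, hmin⟩, (max_le_iff.1 hb).2⟩
  simp only [hiff]
  exact (isCompact_setOf_exists_forall_le (hg.sup lowerSemicontinuousOn_const)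
    (fun x hx ↦ le_max_of_le_left (hg0 x hx)) hf hK hne hc d).isClosed

theorem exists_le_and_exists_ge (hg : LowerSemicontinuousOn g K) (hg0 : ∀ x ∈ K, 0 ≤ g x)
    (hf : LowerSemicontinuousOn f K) (hK : ∀ C, IsCompact {x ∈ K | f x ≤ C}) (hne : K.Nonempty)
    (hcover : ∀ α > 0, ∀ x ∈ tikhonovMinimizers K g f α, g x ≤ a ∨ b ≤ g x)
    (hle : ∃ α > 0, ∃ x ∈ tikhonovMinimizers K g f α, g x ≤ a)
    (hge : ∃ α > 0, ∃ x ∈ tikhonovMinimizers K g f α, b ≤ g x) :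
    ∃ α > 0, (∃ x ∈ tikhonovMinimizers K g f α, g x ≤ a) ∧
      ∃ x ∈ tikhonovMinimizers K g f α, b ≤ g x := by
  obtain ⟨α₁, hα₁, hle⟩ := hle
  obtain ⟨α₂, hα₂, hge⟩ := hge
  have hmin : 0 < min α₁ α₂ := lt_min hα₁ hα₂
  have hsub : uIcc α₁ α₂ ⊆
      {α ∈ uIcc α₁ α₂ | ∃ x ∈ tikhonovMinimizers K g f α, g x ≤ a} ∪
        {α ∈ uIcc α₁ α₂ | ∃ x ∈ tikhonovMinimizers K g f α, b ≤ g x} := by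
    intro α hα
    have hα0 : 0 < α := hmin.trans_le hα.1
    obtain ⟨x, hx⟩ := nonempty hg hg0 hf hK hne hα0
    exact (hcover α hα0 x hx).imp (fun h ↦ ⟨hα, x, hx, h⟩) fun h ↦ ⟨hα, x, hx, h⟩
  obtain ⟨α, hα, ⟨-, hαle⟩, -, hαge⟩ := isPreconnected_closed_iff.1
    isPreconnected_uIcc _ _
    (isClosed_setOf_exists_le hg hg0 hf hK hne hmin (max α₁ α₂) a)
    (isClosed_setOf_exists_ge hg hg0 hf hK hne hmin (max α₁ α₂) b)
    hsub ⟨α₁, left_mem_uIcc, left_mem_uIcc, hle⟩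
    ⟨α₂, right_mem_uIcc, right_mem_uIcc, hge⟩
  exact ⟨α, hmin.trans_le hα.1, hαle, hαge⟩

theorem exists_mem_Icc (hg : LowerSemicontinuousOn g K) (hg0 : ∀ x ∈ K, 0 ≤ g x)
    (hf : LowerSemicontinuousOn f K) (hf0 : ∀ x ∈ K, 0 ≤ f x)
    (hK : ∀ C, IsCompact {x ∈ K | f x ≤ C}) (hab : a ≤ b) {z : X} (hz : z ∈ K) (hza : g z < a)
    {x₀ : X} (hx₀ : x₀ ∈ K) (hfar : ∀ x ∈ K, g x ≤ b → f x₀ < f x)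
    (hnojump : ∀ α > 0, ∀ u ∈ tikhonovMinimizers K g f α, ∀ v ∈ tikhonovMinimizers K g f α,
      ¬(g u < a ∧ b < g v)) :
    ∃ α > 0, ∃ x ∈ tikhonovMinimizers K g f α, g x ∈ Icc a b := by
  by_contra! hgap
  have hne : K.Nonempty := ⟨z, hz⟩
  obtain ⟨α₁, hα₁, hlt⟩ := exists_pos_forall_lt hf0 hz hza
  obtain ⟨α₂, hα₂, hgt⟩ := exists_pos_forall_gt hg hg0 hf hK hx₀ hfar
  obtain ⟨u₁, hu₁⟩ := nonempty hg hg0 hf hK hne hα₁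
  obtain ⟨v₂, hv₂⟩ := nonempty hg hg0 hf hK hne hα₂
  have hcover (α) (hα : α > 0) (x) (hx : x ∈ tikhonovMinimizers K g f α) : g x ≤ a ∨ b ≤ g x :=
    (le_total (g x) a).imp_right fun hax ↦ le_of_not_ge fun hxb ↦ hgap α hα x hx ⟨hax, hxb⟩
  obtain ⟨α, hα, ⟨u, hu, hua⟩, v, hv, hbv⟩ := exists_le_and_exists_ge hg hg0 hf hK hne hcover
    ⟨α₁, hα₁, u₁, hu₁, (hlt u₁ hu₁).le⟩ ⟨α₂, hα₂, v₂, hv₂, (hgt v₂ hv₂).le⟩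
  exact hnojump α hα u hu v hv
    ⟨lt_of_not_ge fun hau ↦ hgap α hα u hu ⟨hau, hua.trans hab⟩,
      lt_of_not_ge fun hvb ↦ hgap α hα v hv ⟨hab.trans hbv, hvb⟩⟩

theorem exists_rpow_mem_Icc {r : X → ℝ} (hr : LowerSemicontinuousOn r K) (hr0 : ∀ x, 0 ≤ r x)
    {p : ℝ} (hp : 0 < p) (hf : LowerSemicontinuousOn f K) (hf0 : ∀ x ∈ K, 0 ≤ f x)
    (hK : ∀ C, IsCompact {x ∈ K | f x ≤ C}) (hab : a ≤ b) {z : X} (hz : z ∈ K) (hza : r z < a)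
    {x₀ : X} (hx₀ : x₀ ∈ K) (hfar : ∀ x ∈ K, r x ≤ b → f x₀ < f x)
    (hnojump : ∀ α > 0, ∀ u ∈ tikhonovMinimizers K (r · ^ p) f α,
      ∀ v ∈ tikhonovMinimizers K (r · ^ p) f α, ¬(r u < a ∧ b < r v)) :
    ∃ α > 0, ∃ x ∈ tikhonovMinimizers K (r · ^ p) f α, r x ∈ Icc a b := by
  have ha : 0 ≤ a := (hr0 z).trans hza.le
  have hb : 0 ≤ b := ha.trans hab
  simp only [mem_Icc, ← Real.rpow_le_rpow_iff ha (hr0 _) hp,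
    ← Real.rpow_le_rpow_iff (hr0 _) hb hp, ← Real.rpow_lt_rpow_iff (hr0 _) ha hp,
    ← Real.rpow_lt_rpow_iff hb (hr0 _) hp, ← Real.rpow_le_rpow_iff ha hb hp]
    at hab hza hfar hnojump ⊢
  exact exists_mem_Icc (lowerSemicontinuousOn_rpow_const hr hr0 hp.le)
    (fun x _ ↦ Real.rpow_nonneg (hr0 x) p) hf hf0 hK hab hz hza hx₀ hfar hnojump

end tikhonovMinimizers

theorem exists_mul_add_le_mul_of_tendsto_zero {γ : ℕ → ℝ} (hγ : Tendsto γ atTop (𝓝 0))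
    {δ τ lam : ℝ} (hδ : 0 < δ) (hlam : τ < lam) : ∃ m, τ * (δ + γ m) ≤ lam * δ := by
  have hlim : Tendsto (fun m ↦ τ * (δ + γ m)) atTop (𝓝 (τ * (δ + 0))) :=
    (hγ.const_add δ).const_mul τ
  rw [add_zero] at hlim
  exact (hlim.eventually_le_const (mul_lt_mul_of_pos_right hlam hδ)).exists

theorem stmt_9_general {X Y : Type*} [TopologicalSpace X] [SeminormedAddCommGroup Y]
    (K : ℕ → Set X) (F : X → Y) (yδ : Y)
    (hF : ∀ m, LowerSemicontinuousOn (fun x ↦ ‖F x - yδ‖) (K m))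
    (δ : ℝ) (hδ : 0 < δ) (p : ℝ) (hp : 0 < p)
    (f : X → ℝ) (hf0 : ∀ x, 0 ≤ f x) (hflsc : ∀ m, LowerSemicontinuousOn f (K m))
    (hcompact : ∀ m C, IsCompact {x ∈ K m | f x ≤ C})
    (x₀ : X) (hx₀K : ∀ m, x₀ ∈ K m) (hx₀ : ∀ x, f x = 0 ↔ x = x₀)
    (τ τ₂ lam : ℝ) (hτ : 1 < τ) (hττ₂ : τ < τ₂) (hτ₂lam : τ₂ < lam)
    (z : ℕ → X) (hz : ∀ m, z m ∈ K m) (γ : ℕ → ℝ) (hγ0 : ∀ m, 0 ≤ γ m)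
    (hzres : ∀ m, ‖F (z m) - yδ‖ ≤ δ + γ m) (hγlim : Tendsto γ atTop (𝓝 0))
    (hx₀res : ∀ m, τ₂ * (δ + γ m) < ‖F x₀ - yδ‖)
    (hnojump : ∀ m, ¬ ∃ α : ℝ, 0 < α ∧ ∃ u ∈ K m, ∃ v ∈ K m,
      (∀ w ∈ K m, ‖F u - yδ‖ ^ p + α * f u ≤ ‖F w - yδ‖ ^ p + α * f w) ∧
      (∀ w ∈ K m, ‖F v - yδ‖ ^ p + α * f v ≤ ‖F w - yδ‖ ^ p + α * f w) ∧
      ‖F u - yδ‖ < τ * (δ + γ m) ∧ τ₂ * (δ + γ m) < ‖F v - yδ‖) :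
    ∃ (m : ℕ) (α : ℝ), 0 < α ∧ ∃ x ∈ K m,
      (∀ v ∈ K m, ‖F x - yδ‖ ^ p + α * f x ≤ ‖F v - yδ‖ ^ p + α * f v) ∧
      τ * δ ≤ ‖F x - yδ‖ ∧ ‖F x - yδ‖ ≤ lam * δ := by
  obtain ⟨m, hm⟩ := exists_mul_add_le_mul_of_tendsto_zero hγlim hδ hτ₂lam
  have hnoise : 0 < δ + γ m := add_pos_of_pos_of_nonneg hδ (hγ0 m)
  have hfar (x : X) (hx : ‖F x - yδ‖ ≤ τ₂ * (δ + γ m)) : f x₀ < f x := by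
    rw [(hx₀ x₀).2 rfl]
    refine (hf0 x).lt_of_ne' fun hfx ↦ ?_
    exact (hx₀res m).not_ge ((hx₀ x).1 hfx ▸ hx)
  obtain ⟨α, hα, x, ⟨hx, hmin⟩, hτx, hxτ₂⟩ := tikhonovMinimizers.exists_rpow_mem_Icc
    (hF m) (fun _ ↦ norm_nonneg _) hp (hflsc m) (fun x _ ↦ hf0 x) (hcompact m)
    (mul_le_mul_of_nonneg_right hττ₂.le hnoise.le) (hz m)
    ((hzres m).trans_lt (lt_mul_of_one_lt_left hnoise hτ)) (hx₀K m) (fun x _ ↦ hfar x)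
    fun α hα u hu v hv hjump ↦ hnojump m ⟨α, hα, u, hu.1, v, hv.1, hu.2, hv.2, hjump⟩
  refine ⟨m, α, hα, x, hx, hmin, le_trans ?_ hτx, hxτ₂.trans hm⟩
  exact mul_le_mul_of_nonneg_left (le_add_of_nonneg_right (hγ0 m)) (zero_le_one.trans hτ.le)

/-- Simultaneous discrepancy-based choice of the discretization level `m` and of the
regularization parameter `α`: there exist `m`, `α > 0` and a Tikhonov minimizer over
`D ∩ X_m` whose residual lies in the band `[τδ, λδ]`. -/
theorem stmt_9 {X Y : Type*} [NormedAddCommGroup X] [NormedSpace ℝ X]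
    [NormedAddCommGroup Y] [NormedSpace ℝ Y]
    (D : Set X) (hDclosed : IsClosed D) (hDconv : Convex ℝ D)
    (F : X → Y) (hF : Continuous F)
    (yδ : Y) (δ : ℝ) (hδ : 0 < δ)
    (p : ℝ) (hp : 1 ≤ p)
    (f : X → ℝ) (hf0 : ∀ x, 0 ≤ f x) (hfconv : ConvexOn ℝ Set.univ f)
    (hflsc : LowerSemicontinuous f)
    (hfcoer : ∀ C : ℝ, Bornology.IsBounded {x : X | f x ≤ C})
    (x₀ : X) (hx₀D : x₀ ∈ D) (hx₀ : ∀ x, f x = 0 ↔ x = x₀)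
    (τ τ₂ lam : ℝ) (hτ : 1 < τ) (hττ₂ : τ < τ₂) (hτ₂lam : τ₂ < lam)
    (Xm : ℕ → Subspace ℝ X) (hfd : ∀ m, FiniteDimensional ℝ (Xm m))
    (hXmono : Monotone Xm)
    (hDmne : ∀ m, (D ∩ (Xm m : Set X)).Nonempty)
    (hx₀m : ∀ m, x₀ ∈ (Xm m : Set X))
    (z : ℕ → X) (hz : ∀ m, z m ∈ D ∩ (Xm m : Set X))
    (γ : ℕ → ℝ) (hγ0 : ∀ m, 0 ≤ γ m)
    (hzres : ∀ m, ‖F (z m) - yδ‖ ≤ δ + γ m)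
    (hγlim : Tendsto γ atTop (𝓝 0))
    (hx₀res : ∀ m, τ₂ * (δ + γ m) < ‖F x₀ - yδ‖)
    (hnojump : ∀ m, ¬ ∃ α : ℝ, 0 < α ∧
      ∃ u ∈ D ∩ (Xm m : Set X), ∃ v ∈ D ∩ (Xm m : Set X),
      (∀ w ∈ D ∩ (Xm m : Set X),
        ‖F u - yδ‖ ^ p + α * f u ≤ ‖F w - yδ‖ ^ p + α * f w) ∧
      (∀ w ∈ D ∩ (Xm m : Set X),
        ‖F v - yδ‖ ^ p + α * f v ≤ ‖F w - yδ‖ ^ p + α * f w) ∧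
      ‖F u - yδ‖ < τ * (δ + γ m) ∧ τ₂ * (δ + γ m) < ‖F v - yδ‖) :
    ∃ (m : ℕ) (α : ℝ), 0 < α ∧ ∃ x ∈ D ∩ (Xm m : Set X),
      (∀ v ∈ D ∩ (Xm m : Set X),
        ‖F x - yδ‖ ^ p + α * f x ≤ ‖F v - yδ‖ ^ p + α * f v) ∧
      τ * δ ≤ ‖F x - yδ‖ ∧ ‖F x - yδ‖ ≤ lam * δ :=
  stmt_9_general (fun m ↦ D ∩ (Xm m : Set X)) F yδ
    (fun _ ↦ (hF.sub continuous_const).norm.continuousOn.lowerSemicontinuousOn) δ hδ p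
    (one_pos.trans_le hp) f hf0 (fun _ ↦ hflsc.lowerSemicontinuousOn _)
    (fun m C ↦ isCompact_sublevel_inter_of_finiteDimensional (Xm m) hDclosed hflsc (hfcoer C))
    x₀ (fun m ↦ ⟨hx₀D, hx₀m m⟩) hx₀ τ τ₂ lam hτ hττ₂ hτ₂lam z hz γ hγ0 hzres hγlim hx₀res hnojump
end

section
/- Let X and Y be real normed spaces, D ⊆ X weakly sequentially closed, F : X → Y weakly sequentially continuous on D, p ∈ [1, ∞), y ∈ Y, and let f : X → ℝ be nonnegative, coercive and weakly sequentially lower semicontinuous. Assume every bounded sequence in D has a weakly convergent subsequence. Let x† ∈ D be an f-minimizing solution of F(x) = y, let 1 < τ < λ and ε ∈ (0, τ − 1). Let δ_k > 0 with δ_k → 0, y_k ∈ Y with ‖y − y_k‖ ≤ δ_k, α_k > 0, and D_k ⊆ D. For each k let x_k minimize x ↦ ‖F(x) − y_k‖^p + α_k f(x) over D_k and satisfy τδ_k ≤ ‖F(x_k) − y_k‖ ≤ λδ_k, and let x̄_k ∈ D_k satisfy ‖F(x̄_k) − y_k‖ < (τ − ε)δ_k and f(x̄_k) → f(x†). Then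 (x_k) has a subsequence converging weakly to an f-minimizing solution x̃ of F(x) = y with f(x̃) = f(x†), and δ_k^p / α_k → 0 as k → ∞. -/
open Filter Topology

/-!
The minimizer `x_k` of the Tikhonov functional has residual at least `τ δ_k`, whereas `x̄_k` has
residual at most `σ δ_k` for some `σ < τ`. Comparing the values of the functional at both gives
`(τ ^ p - σ ^ p) δ_k ^ p ≤ α_k (f x̄_k - f x_k)`. In particular `f x_k ≤ f x̄_k`, so the penalties
`f x_k` stay bounded above and every subsequence of `x_k` has a further one converging weakly, to a
solution of `F x = y`. Lower semicontinuity forces the penalty of that solution, and the limit of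
`f x_k` along the subsequence, to be `lim f x̄_k`. Hence `f x_k` and `f x̄_k` have the same limit,
and the displayed inequality, divided by `α_k`, yields `δ_k ^ p / α_k → 0`.
-/

lemma rpow_sub_rpow_mul_le_of_add_le {p σ τ δ α a b s t : ℝ} (hp : 0 ≤ p) (hσ : 0 ≤ σ)
    (hτ : 0 ≤ τ) (hδ : 0 ≤ δ) (hb : 0 ≤ b) (hτa : τ * δ ≤ a) (hbσ : b ≤ σ * δ)
    (hab : a ^ p + α * s ≤ b ^ p + α * t) :
    (τ ^ p - σ ^ p) * δ ^ p ≤ α * (t - s) := by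
  have ha_pow : τ ^ p * δ ^ p ≤ a ^ p := by
    rw [← Real.mul_rpow hτ hδ]
    exact Real.rpow_le_rpow (mul_nonneg hτ hδ) hτa hp
  have hb_pow : b ^ p ≤ σ ^ p * δ ^ p := by
    rw [← Real.mul_rpow hσ hδ]
    exact Real.rpow_le_rpow hb hbσ hp
  linarith

lemma tendsto_div_zero_of_mul_le_mul_sub {ι : Type*} {l : Filter ι} {c m : ℝ} {d α s t : ι → ℝ}
    (hc : 0 < c) (hd : ∀ i, 0 ≤ d i) (hα : ∀ i, 0 < α i)
    (hle : ∀ i, c * d i ≤ α i * (t i - s i))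
    (hs : Tendsto s l (𝓝 m)) (ht : Tendsto t l (𝓝 m)) :
    Tendsto (fun i => d i / α i) l (𝓝 0) := by
  have hgap : Tendsto (fun i => (t i - s i) / c) l (𝓝 0) := by
    simpa using (ht.sub hs).div_const c
  refine squeeze_zero (fun i => div_nonneg (hd i) (hα i).le) (fun i => ?_) hgap
  rw [div_le_div_iff₀ (hα i) hc]
  linarith [hle i]

section Limits

variable {ι R : Type*} {l : Filter ι} [LinearOrder R] [TopologicalSpace R] [OrderTopology R]
  {b m : R} {s g : ι → R}

lemma le_of_forall_lt_eventually_lt [DenselyOrdered R] [l.NeBot]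
    (hlow : ∀ a < b, ∀ᶠ i in l, a < s i) (hsg : ∀ i, s i ≤ g i) (hg : Tendsto g l (𝓝 m)) :
    b ≤ m :=
  le_of_forall_lt_imp_le_of_dense fun a hab =>
    ge_of_tendsto hg ((hlow a hab).mono fun i hi => hi.le.trans (hsg i))

lemma tendsto_of_forall_lt_eventually_lt_of_le (hlow : ∀ a < m, ∀ᶠ i in l, a < s i)
    (hsg : ∀ i, s i ≤ g i) (hg : Tendsto g l (𝓝 m)) : Tendsto s l (𝓝 m) :=
  tendsto_order.2 ⟨hlow, fun _ ha => (hg.eventually_lt_const ha).mono fun i => (hsg i).trans_lt⟩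

lemma tendsto_of_norm_sub_le_mul {E : Type*} [SeminormedAddCommGroup E] {u v : ι → E} {y : E}
    {C : ℝ} {δ : ι → ℝ} (hδ : Tendsto δ l (𝓝 0)) (hv : ∀ i, ‖y - v i‖ ≤ δ i)
    (hu : ∀ i, ‖u i - v i‖ ≤ C * δ i) : Tendsto u l (𝓝 y) := by
  have huv : Tendsto (fun i => u i - v i) l (𝓝 0) :=
    squeeze_zero_norm hu (by simpa using hδ.const_mul C)
  have hvy : Tendsto (fun i => y - v i) l (𝓝 0) := squeeze_zero_norm hv hδ
  simpa using (huv.sub hvy).add_const y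

end Limits

section Weak

variable {X Y : Type*} [NormedAddCommGroup X] [NormedSpace ℝ X] [TopologicalSpace Y]
  {D : Set X} {F : X → Y} {f : X → ℝ} {y : Y}

lemma weakTendsto_of_tendsto_s12 {u : ℕ → X} {z : X} (h : Tendsto u atTop (𝓝 z)) : WeakTendsto u z :=
  fun φ => (φ.continuous.tendsto z).comp h

lemma WeakTendsto.unique {u : ℕ → X} {z w : X} (hz : WeakTendsto u z) (hw : WeakTendsto u w) :
    z = w :=
  (SeparatingDual.eq_iff_forall_dual_eq (R := ℝ)).2 fun φ => tendsto_nhds_unique (hz φ) (hw φ)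

/-- The graph of `F` over `D` is sequentially closed at height `y`, for weak convergence of the
arguments and convergence of the values: weak limits of approximate solutions of `F x = y`
are solutions. -/
def IsWeakSeqClosedAt (F : X → Y) (D : Set X) (y : Y) : Prop :=
  ∀ (u : ℕ → X) (z : X), (∀ k, u k ∈ D) → WeakTendsto u z →
    Tendsto (fun k => F (u k)) atTop (𝓝 y) → z ∈ D ∧ F z = y

lemma IsWeakSeqClosedAt.of_weakSeqContinuous {E : Type*} [NormedAddCommGroup E] [NormedSpace ℝ E]
    {F : X → E} {y : E}
    (hD : ∀ (u : ℕ → X) (z : X), (∀ k, u k ∈ D) → WeakTendsto u z → z ∈ D)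
    (hF : ∀ (u : ℕ → X) (z : X), (∀ k, u k ∈ D) → z ∈ D → WeakTendsto u z →
      WeakTendsto (fun k => F (u k)) (F z)) :
    IsWeakSeqClosedAt F D y := fun u z hu hz hFu =>
  have hzD := hD u z hu hz
  ⟨hzD, (hF u z hu hzD hz).unique (weakTendsto_of_tendsto_s12 hFu)⟩

/-- A penalty suitable for Tikhonov regularization over `D`: its sublevel sets in `D` are weakly
sequentially precompact and it is weakly sequentially lower semicontinuous along sequences in `D`.
Lower semicontinuity is phrased without `liminf`, whose real value is junk for sequences that are
not bounded below. -/
structure IsStabilizer (f : X → ℝ) (D : Set X) : Prop where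
  exists_subseq_weakTendsto : ∀ (u : ℕ → X) (C : ℝ), (∀ k, u k ∈ D) → (∀ k, f (u k) ≤ C) →
    ∃ (φ : ℕ → ℕ) (z : X), StrictMono φ ∧ WeakTendsto (fun l => u (φ l)) z
  eventually_lt : ∀ (u : ℕ → X) (z : X), (∀ k, u k ∈ D) → WeakTendsto u z →
    ∀ a < f z, ∀ᶠ k in atTop, a < f (u k)

lemma IsStabilizer.of_coercive (hbdd : BddBelow (f '' D))
    (hcoer : ∀ C : ℝ, Bornology.IsBounded {v ∈ D | f v ≤ C})
    (hlsc : ∀ (u : ℕ → X) (z : X), (∀ k, u k ∈ D) → WeakTendsto u z →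
      f z ≤ liminf (fun k => f (u k)) atTop)
    (hcpt : ∀ u : ℕ → X, (∀ k, u k ∈ D) → Bornology.IsBounded (Set.range u) →
      ∃ (φ : ℕ → ℕ) (z : X), StrictMono φ ∧ WeakTendsto (fun l => u (φ l)) z) :
    IsStabilizer f D where
  exists_subseq_weakTendsto u C hu hC :=
    hcpt u hu ((hcoer C).subset (Set.range_subset_iff.2 fun k => ⟨hu k, hC k⟩))
  eventually_lt u z hu hz a ha := by
    obtain ⟨B, hB⟩ := hbdd
    exact eventually_lt_of_lt_liminf (ha.trans_le (hlsc u z hu hz))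
      (isBoundedUnder_of ⟨B, fun k => hB (Set.mem_image_of_mem f (hu k))⟩)

variable {m : ℝ} {u : ℕ → X} {g : ℕ → ℝ}

lemma IsStabilizer.exists_subseq_weakTendsto_solution (hf : IsStabilizer f D)
    (hF : IsWeakSeqClosedAt F D y) (hm : ∀ v ∈ D, F v = y → m ≤ f v) (hu : ∀ k, u k ∈ D)
    (hFu : Tendsto (fun k => F (u k)) atTop (𝓝 y)) (hug : ∀ k, f (u k) ≤ g k)
    (hg : Tendsto g atTop (𝓝 m)) :
    ∃ φ : ℕ → ℕ, StrictMono φ ∧ ∃ z ∈ D, WeakTendsto (fun l => u (φ l)) z ∧ F z = y ∧ f z = m ∧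
      Tendsto (fun l => f (u (φ l))) atTop (𝓝 m) := by
  obtain ⟨C, hC⟩ := hg.bddAbove_range
  obtain ⟨φ, z, hφ, hz⟩ := hf.exists_subseq_weakTendsto u C hu
    fun k => (hug k).trans (hC (Set.mem_range_self k))
  obtain ⟨hzD, hFz⟩ := hF _ z (fun l => hu (φ l)) hz (hFu.comp hφ.tendsto_atTop)
  have hlow := hf.eventually_lt _ z (fun l => hu (φ l)) hz
  have hgφ : Tendsto (fun l => g (φ l)) atTop (𝓝 m) := hg.comp hφ.tendsto_atTop
  have hfz : f z = m :=
    (le_of_forall_lt_eventually_lt hlow (fun l => hug (φ l)) hgφ).antisymm (hm z hzD hFz)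
  exact ⟨φ, hφ, z, hzD, hz, hFz, hfz,
    tendsto_of_forall_lt_eventually_lt_of_le (hfz ▸ hlow) (fun l => hug (φ l)) hgφ⟩

lemma IsStabilizer.tendsto_apply (hf : IsStabilizer f D)
    (hF : IsWeakSeqClosedAt F D y) (hm : ∀ v ∈ D, F v = y → m ≤ f v) (hu : ∀ k, u k ∈ D)
    (hFu : Tendsto (fun k => F (u k)) atTop (𝓝 y)) (hug : ∀ k, f (u k) ≤ g k)
    (hg : Tendsto g atTop (𝓝 m)) :
    Tendsto (fun k => f (u k)) atTop (𝓝 m) := by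
  refine tendsto_of_subseq_tendsto fun ns hns => ?_
  obtain ⟨φ, -, z, -, -, -, -, hφ⟩ := hf.exists_subseq_weakTendsto_solution hF hm
    (fun l => hu (ns l)) (hFu.comp hns) (fun l => hug (ns l)) (hg.comp hns)
  exact ⟨φ, hφ⟩

end Weak

/-- The Tikhonov functional `x ↦ ‖F x - y‖ ^ p + α f x` with data `y`, penalty `f` and
regularization parameter `α`. -/
noncomputable def tikhonovFunctional {X Y : Type*} [SeminormedAddCommGroup Y]
    (F : X → Y) (f : X → ℝ) (p α : ℝ) (y : Y) (x : X) : ℝ :=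
  ‖F x - y‖ ^ p + α * f x

lemma rpow_sub_rpow_mul_le_of_isMinOn_tikhonovFunctional {X Y : Type*} [SeminormedAddCommGroup Y]
    {F : X → Y} {f : X → ℝ} {p α σ τ δ : ℝ} {y : Y} {S : Set X} {x v : X}
    (hp : 0 ≤ p) (hσ : 0 ≤ σ) (hτ : 0 ≤ τ) (hδ : 0 ≤ δ)
    (hx : IsMinOn (tikhonovFunctional F f p α y) S x) (hv : v ∈ S)
    (hτx : τ * δ ≤ ‖F x - y‖) (hvσ : ‖F v - y‖ ≤ σ * δ) :
    (τ ^ p - σ ^ p) * δ ^ p ≤ α * (f v - f x) :=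
  rpow_sub_rpow_mul_le_of_add_le hp hσ hτ hδ (norm_nonneg _) hτx hvσ (isMinOn_iff.1 hx v hv)

theorem stmt_12_general {X Y : Type*} [NormedAddCommGroup X] [NormedSpace ℝ X]
    [SeminormedAddCommGroup Y] {D : Set X} {F : X → Y} {f : X → ℝ} {y : Y}
    {p m σ τ lam : ℝ} {δ α : ℕ → ℝ} {yk : ℕ → Y} {Dk : ℕ → Set X} {x xbar : ℕ → X}
    (hF : IsWeakSeqClosedAt F D y) (hf : IsStabilizer f D)
    (hm : ∀ v ∈ D, F v = y → m ≤ f v)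
    (hp : 0 < p) (hσ : 0 ≤ σ) (hστ : σ < τ)
    (hδ0 : Tendsto δ atTop (𝓝 0)) (hyk : ∀ k, ‖y - yk k‖ ≤ δ k)
    (hα : ∀ k, 0 < α k) (hDk : ∀ k, Dk k ⊆ D) (hxmem : ∀ k, x k ∈ Dk k)
    (hxmin : ∀ k, IsMinOn (tikhonovFunctional F f p (α k) (yk k)) (Dk k) (x k))
    (hxdisc : ∀ k, τ * δ k ≤ ‖F (x k) - yk k‖ ∧ ‖F (x k) - yk k‖ ≤ lam * δ k)
    (hxbarmem : ∀ k, xbar k ∈ Dk k) (hxbardisc : ∀ k, ‖F (xbar k) - yk k‖ ≤ σ * δ k)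
    (hxbarf : Tendsto (fun k => f (xbar k)) atTop (𝓝 m)) :
    (∃ φ : ℕ → ℕ, StrictMono φ ∧ ∃ xt ∈ D, WeakTendsto (fun l => x (φ l)) xt ∧ F xt = y ∧
      (∀ v ∈ D, F v = y → f xt ≤ f v) ∧ f xt = m) ∧
    Tendsto (fun k => δ k ^ p / α k) atTop (𝓝 0) := by
  have hδp (k) : 0 ≤ δ k ^ p := Real.rpow_nonneg ((norm_nonneg _).trans (hyk k)) p
  have hgap : 0 < τ ^ p - σ ^ p := sub_pos.2 (Real.rpow_lt_rpow hσ hστ hp)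
  have hkey (k) : (τ ^ p - σ ^ p) * δ k ^ p ≤ α k * (f (xbar k) - f (x k)) :=
    rpow_sub_rpow_mul_le_of_isMinOn_tikhonovFunctional hp.le hσ (hσ.trans hστ.le)
      ((norm_nonneg _).trans (hyk k)) (hxmin k) (hxbarmem k) (hxdisc k).1 (hxbardisc k)
  have hle (k) : f (x k) ≤ f (xbar k) := sub_nonneg.1 <|
    nonneg_of_mul_nonneg_right ((mul_nonneg hgap.le (hδp k)).trans (hkey k)) (hα k)
  have hxD (k) : x k ∈ D := hDk k (hxmem k)
  have hFx : Tendsto (fun k => F (x k)) atTop (𝓝 y) :=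
    tendsto_of_norm_sub_le_mul hδ0 hyk fun k => (hxdisc k).2
  have hfx := hf.tendsto_apply hF hm hxD hFx hle hxbarf
  obtain ⟨φ, hφ, xt, hxtD, hxt, hFxt, hfxt, -⟩ :=
    hf.exists_subseq_weakTendsto_solution hF hm hxD hFx hle hxbarf
  exact ⟨⟨φ, hφ, xt, hxtD, hxt, hFxt, fun v hv hFv => hfxt.trans_le (hm v hv hFv), hfxt⟩,
    tendsto_div_zero_of_mul_le_mul_sub hgap hδp hα hkey hfx hxbarf⟩

/-- Convergence of Tikhonov minimizers chosen by the discrepancy principle: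
a subsequence converges weakly to an `f`-minimizing solution with the same penalty
value as `x†`, and `δ_k^p / α_k → 0`. -/
theorem stmt_12 {X Y : Type*} [NormedAddCommGroup X] [NormedSpace ℝ X]
    [NormedAddCommGroup Y] [NormedSpace ℝ Y]
    (D : Set X)
    (hDwsc : ∀ (u : ℕ → X) (x : X), (∀ k, u k ∈ D) → WeakTendsto u x → x ∈ D)
    (F : X → Y)
    (hFwc : ∀ (u : ℕ → X) (x : X), (∀ k, u k ∈ D) → x ∈ D → WeakTendsto u x →
      WeakTendsto (fun k => F (u k)) (F x))
    (p : ℝ) (hp : 1 ≤ p) (y : Y)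
    (f : X → ℝ) (hf0 : ∀ x, 0 ≤ f x)
    (hfcoer : ∀ C : ℝ, Bornology.IsBounded {x : X | f x ≤ C})
    (hfwlsc : ∀ (u : ℕ → X) (x : X), WeakTendsto u x →
      f x ≤ Filter.liminf (fun k => f (u k)) atTop)
    (hcpt : ∀ (u : ℕ → X), (∀ k, u k ∈ D) → Bornology.IsBounded (Set.range u) →
      ∃ (φ : ℕ → ℕ) (z : X), StrictMono φ ∧ WeakTendsto (fun l => u (φ l)) z)
    (xdag : X) (hxdagD : xdag ∈ D) (hxdagsol : F xdag = y)
    (hxdagmin : ∀ v ∈ D, F v = y → f xdag ≤ f v)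
    (τ lam ε : ℝ) (hτ : 1 < τ) (hτlam : τ < lam) (hε : ε ∈ Set.Ioo 0 (τ - 1))
    (δ : ℕ → ℝ) (hδpos : ∀ k, 0 < δ k) (hδ0 : Tendsto δ atTop (𝓝 0))
    (yk : ℕ → Y) (hyk : ∀ k, ‖y - yk k‖ ≤ δ k)
    (α : ℕ → ℝ) (hαpos : ∀ k, 0 < α k)
    (Dk : ℕ → Set X) (hDk : ∀ k, Dk k ⊆ D)
    (x : ℕ → X)
    (hxmem : ∀ k, x k ∈ Dk k)
    (hxmin : ∀ k, ∀ v ∈ Dk k,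
      ‖F (x k) - yk k‖ ^ p + α k * f (x k) ≤ ‖F v - yk k‖ ^ p + α k * f v)
    (hxdisc : ∀ k, τ * δ k ≤ ‖F (x k) - yk k‖ ∧ ‖F (x k) - yk k‖ ≤ lam * δ k)
    (xbar : ℕ → X)
    (hxbarmem : ∀ k, xbar k ∈ Dk k)
    (hxbardisc : ∀ k, ‖F (xbar k) - yk k‖ < (τ - ε) * δ k)
    (hxbarf : Tendsto (fun k => f (xbar k)) atTop (𝓝 (f xdag))) :
    (∃ (φ : ℕ → ℕ), StrictMono φ ∧ ∃ xt ∈ D,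
      WeakTendsto (fun l => x (φ l)) xt ∧ F xt = y ∧
      (∀ v ∈ D, F v = y → f xt ≤ f v) ∧ f xt = f xdag) ∧
    Tendsto (fun k => δ k ^ p / α k) atTop (𝓝 0) := by
  have hF : IsWeakSeqClosedAt F D y := .of_weakSeqContinuous hDwsc hFwc
  have hf : IsStabilizer f D := .of_coercive ⟨0, Set.forall_mem_image.2 fun v _ => hf0 v⟩
    (fun C => (hfcoer C).subset fun _ hv => hv.2) (fun u z _ => hfwlsc u z) hcpt
  exact stmt_12_general hF hf hxdagmin (by linarith) (by linarith [hε.2]) (sub_lt_self τ hε.1)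
    hδ0 hyk hαpos hDk hxmem (fun k => isMinOn_iff.2 (hxmin k)) hxdisc hxbarmem
    (fun k => (hxbardisc k).le) hxbarf
end
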